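/- arXiv:2404.16518 — 4 statements merged into one kernel-verified Lean document; each statement's English description precedes it below -/
import Mathlib

section
/- Let a, b be distinct letters and k ∈ ℕ. Let u_k = (ab)^k and v_k = (ba)^k (the k-fold concatenations of [a,b] and [b,a]). Then v_k = u_k.rotate 1, while u_k and v_k differ at every one of their 2k positions, i.e. card { j < 2k : u_k[j] ≠ v_k[j] } = 2k. -/
section

variable {α β : Type*}

theorem flatten_replicate_append_comm (x y : List α) (k : ℕ) :
    (List.replicate k (x ++ y)).flatten ++ x = x ++ (List.replicate k (y ++ x)).flatten := by
  induction k with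
  | zero => simp
  | succ k ih =>
    simp only [List.replicate_succ, List.flatten_cons, List.append_assoc, ih]

theorem rotate_length_flatten_replicate_append (x y : List α) (k : ℕ) :
    (List.replicate k (x ++ y)).flatten.rotate x.length =
      (List.replicate k (y ++ x)).flatten := by
  cases k with
  | zero => simp
  | succ k =>
    simp only [List.replicate_succ, List.flatten_cons, List.append_assoc,
      List.rotate_append_length_eq, flatten_replicate_append_comm]

theorem forall₂_replicate {R : α → β → Prop} {x : α} {y : β} (h : R x y) (k : ℕ) :
    List.Forall₂ R (List.replicate k x) (List.replicate k y) := by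
  induction k with
  | zero => exact .nil
  | succ k ih => exact .cons h ih

theorem forall₂_flatten_replicate {R : α → β → Prop} {u : List α} {v : List β}
    (h : List.Forall₂ R u v) (k : ℕ) :
    List.Forall₂ R (List.replicate k u).flatten (List.replicate k v).flatten :=
  List.rel_flatten (forall₂_replicate h k)

theorem card_filter_getElem?_ne_of_forall₂_ne [DecidableEq α] {u v : List α}
    (h : List.Forall₂ (· ≠ ·) u v) :
    ((Finset.range u.length).filter (fun j => u[j]? ≠ v[j]?)).card = u.length := by
  rw [Finset.filter_true_of_mem, Finset.card_range]
  intro j hj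
  have hu : j < u.length := Finset.mem_range.mp hj
  have hv : j < v.length := h.length_eq ▸ hu
  rw [List.getElem?_eq_getElem hu, List.getElem?_eq_getElem hv]
  exact (Option.some_injective α).ne (h.get hu hv)

end

theorem rotate_one_hamming_max {B : Type*} [DecidableEq B] (a b : B) (hab : a ≠ b)
    (k : ℕ) (u v : List B)
    (hu : u = (List.replicate k [a, b]).flatten)
    (hv : v = (List.replicate k [b, a]).flatten) :
    v = u.rotate 1 ∧
      ((Finset.range (2 * k)).filter (fun j => u[j]? ≠ v[j]?)).card = 2 * k := by
  subst hu hv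
  have hne : List.Forall₂ (· ≠ ·) [a, b] [b, a] := .cons hab (.cons hab.symm .nil)
  have hlen : (List.replicate k [a, b]).flatten.length = 2 * k := by simp [mul_comm]
  refine ⟨(rotate_length_flatten_replicate_append [a] [b] k).symm, ?_⟩
  rw [← hlen]
  exact card_filter_getElem?_ne_of_forall₂_ne (forall₂_flatten_replicate hne k)
end

section
/- Let a, b be distinct letters and let k ≥ 2. Let u = a · b^k · a (one a, then k copies of b, then a) and v = b · a · b^{k−1} · a. Then v is obtained from u by one adjacent transposition (swapping the first two letters), yet u is not a rotation of v (u and v are not conjugate, i.e. ¬ u.IsRotated v). -/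
/-!
Being free of two cyclically consecutive letters `a` is invariant under conjugacy. The word
`a b ^ k a` has such a pair, formed by its last and first letters, whereas the two occurrences
of `a` in `b a b ^ (k - 1) a` cut the cyclic word into two nonempty blocks of letters `b`.
-/

section

variable {α : Type*} {a : α}

/-- The cyclic word `s` does not contain the factor `aa`, where the last letter is followed by the
first one. Stated for `Cycle` so that invariance under conjugacy is automatic; in particular
the one-letter cyclic word `a` counts as containing `aa`. -/
def CyclicallyIsolated (a : α) (s : Cycle α) : Prop :=
  s.Chain fun x y ↦ x = a → y ≠ a

theorem not_cyclicallyIsolated_cons_concat (w : List α) :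
    ¬ CyclicallyIsolated a (a :: (w ++ [a]) : List α) := by
  intro h
  rw [CyclicallyIsolated, Cycle.chain_coe_cons, List.append_assoc, ← List.cons_append,
    List.singleton_append, List.isChain_append_cons_cons] at h
  exact h.2.1 rfl rfl

theorem isChain_imp_ne_concat_of_notMem {l : List α} (hl : a ∉ l) :
    (l ++ [a]).IsChain fun x y ↦ x = a → y ≠ a := by
  have ne_of_mem : ∀ x ∈ l, x ≠ a := fun x hx hxa ↦ hl (hxa ▸ hx)
  refine List.Pairwise.isChain (List.pairwise_append.2 ⟨?_, List.pairwise_singleton _ _, ?_⟩)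
  · exact List.pairwise_of_forall_mem_list fun x hx _ _ hxa ↦ (ne_of_mem x hx hxa).elim
  · exact fun x hx _ _ hxa ↦ (ne_of_mem x hx hxa).elim

theorem isChain_imp_ne_cons_concat_of_notMem {l : List α} (hl : a ∉ l) (hne : l ≠ []) :
    (a :: (l ++ [a])).IsChain fun x y ↦ x = a → y ≠ a := by
  obtain ⟨x, t, rfl⟩ := List.exists_cons_of_ne_nil hne
  exact List.isChain_cons_cons.2
    ⟨fun _ ↦ (List.ne_of_not_mem_cons hl).symm, isChain_imp_ne_concat_of_notMem hl⟩

theorem cyclicallyIsolated_append_cons_concat_of_notMem {p q : List α} (hp : a ∉ p)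
    (hp_ne : p ≠ []) (hq : a ∉ q) (hq_ne : q ≠ []) :
    CyclicallyIsolated a (p ++ a :: (q ++ [a]) : List α) := by
  have last_to_front :
      ((p ++ a :: (q ++ [a]) : List α) : Cycle α) = (a :: (p ++ a :: q) : List α) := by
    simp [Cycle.coe_cons_eq_coe_append]
  rw [CyclicallyIsolated, last_to_front, Cycle.chain_coe_cons, List.append_assoc,
    List.cons_append, ← List.cons_append, List.isChain_split]
  exact ⟨isChain_imp_ne_cons_concat_of_notMem hp hp_ne,
    isChain_imp_ne_cons_concat_of_notMem hq hq_ne⟩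

theorem not_isRotated_append_cons_concat_of_notMem {p q : List α} (w : List α) (hp : a ∉ p)
    (hp_ne : p ≠ []) (hq : a ∉ q) (hq_ne : q ≠ []) :
    ¬ (a :: (w ++ [a])).IsRotated (p ++ a :: (q ++ [a])) := by
  intro h
  apply not_cyclicallyIsolated_cons_concat (a := a) w
  rw [Cycle.coe_eq_coe.2 h]
  exact cyclicallyIsolated_append_cons_concat_of_notMem hp hp_ne hq hq_ne

end

theorem swap_not_conjugate {B : Type*} (a b : B) (hab : a ≠ b) (k : ℕ) (hk : 2 ≤ k)
    (u v : List B)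
    (hu : u = [a] ++ List.replicate k b ++ [a])
    (hv : v = [b, a] ++ List.replicate (k - 1) b ++ [a]) :
    (∃ (x y : List B) (c d : B), u = x ++ c :: d :: y ∧ v = x ++ d :: c :: y) ∧
      ¬ u.IsRotated v := by
  obtain ⟨m, rfl⟩ := Nat.exists_eq_add_of_le' hk
  subst hu hv
  constructor
  · exact ⟨[], List.replicate (m + 1) b ++ [a], a, b, rfl, rfl⟩
  · have notMem_replicate (n : ℕ) : a ∉ List.replicate n b :=
      fun h ↦ hab (List.eq_of_mem_replicate h)
    exact not_isRotated_append_cons_concat_of_notMem (p := [b]) (List.replicate (m + 2) b)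
      (notMem_replicate 1) (List.cons_ne_nil _ _) (notMem_replicate (m + 1))
      (List.cons_ne_nil _ _)
end

section
/- Let ∂ ∈ ℕ and let α₀, β₀, u, v, α₁, β₁ be words over an alphabet B such that |u| = |v|, |α₀| = |β₀| + ∂, |β₁| = |α₁| + ∂, and ∂ < |u|. Suppose the interior of (u,v) at delay ∂ differs, i.e. there exists an index j with j + ∂ < |u| and u[j] ≠ v[j + ∂]. Then for every i ∈ ℕ, the words w₁ = α₀ · u^i · α₁ and w₂ = β₀ · v^i · β₁ have equal length and differ in at least i positions: i ≤ card { p < |w₁| : w₁[p] ≠ w₂[p] }. -/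
/-! If the letters `u[r]` and `v[s]` of the first copies of `u` and `v` face each other and differ,
then, since `u` and `v` have the same length, they face each other in every copy. Each of the `i`
copies thus contributes its own mismatch. -/

section Flatten

variable {B : Type*}

theorem getElem?_flatten_of_forall_length_eq {L : List (List B)} {n r : ℕ}
    (hL : ∀ w ∈ L, w.length = n) (hr : r < n) (k : ℕ) :
    L.flatten[k * n + r]? = L[k]?.bind (·[r]?) := by
  induction L generalizing k with
  | nil => simp
  | cons w L ih =>
    obtain ⟨hw, hL⟩ := List.forall_mem_cons.1 hL
    rw [List.flatten_cons]
    cases k with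
    | zero => simp [List.getElem?_append_left, hw, hr]
    | succ k =>
      have hshift : (k + 1) * n + r = w.length + (k * n + r) := by rw [hw]; ring
      rw [hshift, List.getElem?_append_right (Nat.le_add_right _ _), Nat.add_sub_cancel_left, ih hL,
        List.getElem?_cons_succ]

theorem getElem?_flatten_replicate {u : List B} {i k r : ℕ} (hk : k < i) (hr : r < u.length) :
    (List.replicate i u).flatten[k * u.length + r]? = some u[r] := by
  rw [getElem?_flatten_of_forall_length_eq (fun w hw ↦ by rw [List.eq_of_mem_replicate hw]) hr,
    List.getElem?_replicate_of_lt hk, Option.bind_some, List.getElem?_eq_getElem hr]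

theorem getElem?_append_flatten_replicate_append (α β : List B) {u : List B} {i k r : ℕ}
    (hk : k < i) (hr : r < u.length) :
    (α ++ (List.replicate i u).flatten ++ β)[α.length + (k * u.length + r)]? = some u[r] := by
  have hpow := getElem?_flatten_replicate hk hr
  obtain ⟨hlt, -⟩ := List.getElem?_eq_some_iff.1 hpow
  rw [List.append_assoc, List.getElem?_append_right (Nat.le_add_right _ _),
    Nat.add_sub_cancel_left, List.getElem?_append_left hlt, hpow]

end Flatten

section Mismatches

variable {B : Type*} [DecidableEq B]

/-- The positions at which `w₁` and `w₂` differ; for words of equal length, the cardinality of this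
set is their Hamming distance. Otherwise only positions of `w₁` count, and those beyond the end of
`w₂` all belong to the set. -/
def mismatches (w₁ w₂ : List B) : Finset ℕ :=
  (Finset.range w₁.length).filter (fun p ↦ w₁[p]? ≠ w₂[p]?)

theorem mem_mismatches_of_getElem?_eq_some {w₁ w₂ : List B} {p : ℕ} {x y : B}
    (hx : w₁[p]? = some x) (hy : w₂[p]? = some y) (hxy : x ≠ y) : p ∈ mismatches w₁ w₂ := by
  obtain ⟨hp, -⟩ := List.getElem?_eq_some_iff.1 hx
  rw [mismatches, Finset.mem_filter, Finset.mem_range, hx, hy]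
  exact ⟨hp, fun h ↦ hxy (Option.some_injective B h)⟩

theorem le_card_mismatches_append_flatten_replicate_append {α₀ β₀ u v : List B} (α₁ β₁ : List B)
    {r s : ℕ} (hlen : u.length = v.length) (halign : α₀.length + r = β₀.length + s)
    (hr : r < u.length) (hs : s < v.length) (hne : u[r] ≠ v[s]) (i : ℕ) :
    i ≤ (mismatches (α₀ ++ (List.replicate i u).flatten ++ α₁)
      (β₀ ++ (List.replicate i v).flatten ++ β₁)).card := by
  refine Finset.le_card_of_inj_on_range (fun k ↦ α₀.length + (k * u.length + r)) ?mem ?inj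
  case mem =>
    intro k hk
    have hpos : α₀.length + (k * u.length + r) = β₀.length + (k * v.length + s) := by
      rw [hlen]; omega
    refine mem_mismatches_of_getElem?_eq_some
      (getElem?_append_flatten_replicate_append α₀ α₁ hk hr) ?_ hne
    rw [hpos]
    exact getElem?_append_flatten_replicate_append β₀ β₁ hk hs
  case inj =>
    intro k _ l _ hkl
    have hmul : k * u.length = l * u.length := Nat.add_right_cancel (Nat.add_left_cancel hkl)
    exact Nat.eq_of_mul_eq_mul_right (Nat.zero_lt_of_lt hr) hmul

end Mismatches

theorem pumping_hamming_lower_bound {B : Type*} [DecidableEq B]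
    (del : ℕ) (α₀ β₀ u v α₁ β₁ : List B)
    (hlen : u.length = v.length)
    (hα : α₀.length = β₀.length + del)
    (hβ : β₁.length = α₁.length + del)
    (hdel : del < u.length)
    (hint : ∃ j : ℕ, j + del < u.length ∧ u[j]? ≠ v[j + del]?) :
    ∀ i : ℕ,
      (α₀ ++ (List.replicate i u).flatten ++ α₁).length =
        (β₀ ++ (List.replicate i v).flatten ++ β₁).length ∧
      i ≤ ((Finset.range (α₀ ++ (List.replicate i u).flatten ++ α₁).length).filter
            (fun p =>
              (α₀ ++ (List.replicate i u).flatten ++ α₁)[p]? ≠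
              (β₀ ++ (List.replicate i v).flatten ++ β₁)[p]?)).card := by
  intro i
  obtain ⟨j, hj, hne⟩ := hint
  have hju : j < u.length := by omega
  have hjv : j + del < v.length := hlen ▸ hj
  have hletters : u[j] ≠ v[j + del] := by
    simpa only [List.getElem?_eq_getElem hju, List.getElem?_eq_getElem hjv, ne_eq,
      Option.some_inj] using hne
  have halign : α₀.length + j = β₀.length + (j + del) := by omega
  constructor
  · simp only [List.length_append, List.length_flatten, List.map_replicate, hlen]
    omega
  · exact le_card_mismatches_append_flatten_replicate_append α₁ β₁ hlen halign hju hjv hletters i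
end

section
/- Let M be a deterministic finite automaton over an input alphabet A with a finite set of states, all of which are accessible (reachable from the start state by some input word) and co-accessible (some input word leads from them to an accepting state). Let λ₁, λ₂ assign to each state q and input letter a an output word λᵢ(q,a) over B, let out_i(w) denote the concatenation of the outputs λᵢ along the run of M from the start state on the word w, and let ο₁, ο₂ assign to each state a final output word. Then the following are equivalent: (1) there exists k ∈ ℕ such that for every word w accepted by M, | |out₁(w) · ο₁(eval w)| − |out₂(w) · ο₂(eval w)| | ≤ k, where eval w is the state M reaches on w; (2) there exists k ∈ ℕ such that for every word w accepted by M and every prefix u of w, | |out₁(u)| − |out₂(u)| | ≤ k. -/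
/-- The output word produced along the run of the DFA `M` from state `q`
on the input word `w`, using the transition-output function `lam`. -/
def outFrom {A B σ : Type*} (M : DFA A σ) (lam : σ → A → List B) :
    σ → List A → List B
  | _, [] => []
  | q, a :: w => lam q a ++ outFrom M lam (M.step q a) w

/-! Fix for every state `q` a completion word `c q`. Appending `c q` to an input `u` that leads to
`q` changes the difference of the two output lengths, now including the final outputs, by an amount
depending only on `q`, hence by a bounded amount, as there are finitely many states. With `c q`
empty this passes from prefix outputs to complete outputs; with `c q` leading from `q` to acceptance
whenever possible, it passes back. -/

theorem outFrom_append {A B σ : Type*} (M : DFA A σ) (lam : σ → A → List B)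
    (q : σ) (u v : List A) :
    outFrom M lam q (u ++ v) = outFrom M lam q u ++ outFrom M lam (M.evalFrom q u) v := by
  induction u generalizing q with
  | nil => rfl
  | cons a u ih =>
    simp only [List.cons_append, outFrom, ih, DFA.evalFrom_cons, List.append_assoc]

/-- The complete output of a sequential transducer started in state `q`: the transition outputs
along the run on `w` followed by the final output of the state reached. It is defined for every
word, accepted or not. -/
def outputFrom {A B σ : Type*} (M : DFA A σ) (lam : σ → A → List B) (omi : σ → List B)
    (q : σ) (w : List A) : List B :=
  outFrom M lam q w ++ omi (M.evalFrom q w)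

theorem outputFrom_append {A B σ : Type*} (M : DFA A σ) (lam : σ → A → List B)
    (omi : σ → List B) (q : σ) (u v : List A) :
    outputFrom M lam omi q (u ++ v) =
      outFrom M lam q u ++ outputFrom M lam omi (M.evalFrom q u) v := by
  simp only [outputFrom, outFrom_append, DFA.evalFrom_of_append, List.append_assoc]

/-- The signed difference of the lengths of two words; its absolute value is the length distance
`d_len`. The sign is kept so that the difference is additive under concatenation. -/
def lengthDiff {B₁ B₂ : Type*} (x : List B₁) (y : List B₂) : ℤ :=
  (x.length : ℤ) - (y.length : ℤ)

theorem lengthDiff_append {B₁ B₂ : Type*} (x x' : List B₁) (y y' : List B₂) :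
    lengthDiff (x ++ x') (y ++ y') = lengthDiff x y + lengthDiff x' y' := by
  simp only [lengthDiff, List.length_append, Nat.cast_add]
  ring

theorem exists_nat_forall_abs_le {ι : Type*} [Finite ι] (f : ι → ℤ) :
    ∃ k : ℕ, ∀ i, |f i| ≤ (k : ℤ) := by
  obtain ⟨k, hk⟩ := Finite.exists_le fun i => (f i).natAbs
  exact ⟨k, fun i => by rw [Int.abs_eq_natAbs]; exact_mod_cast hk i⟩

theorem exists_accepting_completion {A σ : Type*} (M : DFA A σ) :
    ∃ c : σ → List A, ∀ q u v, M.evalFrom q (u ++ v) ∈ M.accept →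
      M.evalFrom q (u ++ c (M.evalFrom q u)) ∈ M.accept := by
  refine ⟨fun p => Classical.epsilon fun v => M.evalFrom p v ∈ M.accept, fun q u v hv => ?_⟩
  rw [DFA.evalFrom_of_append] at hv ⊢
  exact Classical.epsilon_spec (p := fun v => M.evalFrom (M.evalFrom q u) v ∈ M.accept) ⟨v, hv⟩

theorem exists_bound_lengthDiff_completion_sub {A B₁ B₂ σ : Type*} [Finite σ] (M : DFA A σ)
    (lam₁ : σ → A → List B₁) (lam₂ : σ → A → List B₂)
    (omi₁ : σ → List B₁) (omi₂ : σ → List B₂) (c : σ → List A) :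
    ∃ k : ℕ, ∀ q u,
      |lengthDiff (outputFrom M lam₁ omi₁ q (u ++ c (M.evalFrom q u)))
          (outputFrom M lam₂ omi₂ q (u ++ c (M.evalFrom q u))) -
        lengthDiff (outFrom M lam₁ q u) (outFrom M lam₂ q u)| ≤ (k : ℤ) := by
  obtain ⟨k, hk⟩ := exists_nat_forall_abs_le fun q =>
    lengthDiff (outputFrom M lam₁ omi₁ q (c q)) (outputFrom M lam₂ omi₂ q (c q))
  refine ⟨k, fun q u => ?_⟩
  rw [outputFrom_append, outputFrom_append, lengthDiff_append, add_sub_cancel_left]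
  exact hk (M.evalFrom q u)

theorem bounded_length_distance_iff_bounded_delay_general
    {A B₁ B₂ σ : Type*} [Finite σ] (M : DFA A σ)
    (lam₁ : σ → A → List B₁) (lam₂ : σ → A → List B₂)
    (omi₁ : σ → List B₁) (omi₂ : σ → List B₂) :
    (∃ k : ℕ, ∀ w : List A, M.eval w ∈ M.accept →
        |((outFrom M lam₁ M.start w ++ omi₁ (M.eval w)).length : ℤ) -
          ((outFrom M lam₂ M.start w ++ omi₂ (M.eval w)).length : ℤ)| ≤ (k : ℤ)) ↔
      (∃ k : ℕ, ∀ w : List A, M.eval w ∈ M.accept →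
        ∀ u : List A, u <+: w →
          |((outFrom M lam₁ M.start u).length : ℤ) -
            ((outFrom M lam₂ M.start u).length : ℤ)| ≤ (k : ℤ)) := by
  constructor
  · rintro ⟨k, hk⟩
    obtain ⟨c, hc⟩ := exists_accepting_completion M
    obtain ⟨D, hD⟩ := exists_bound_lengthDiff_completion_sub M lam₁ lam₂ omi₁ omi₂ c
    refine ⟨k + D, ?_⟩
    rintro _ huv u ⟨v, rfl⟩
    have h_change := abs_le.mp ((abs_abs_sub_abs_le _ _).trans (hD M.start u))
    calc |lengthDiff (outFrom M lam₁ M.start u) (outFrom M lam₂ M.start u)|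
      _ ≤ |lengthDiff (outputFrom M lam₁ omi₁ M.start (u ++ c (M.evalFrom M.start u)))
            (outputFrom M lam₂ omi₂ M.start (u ++ c (M.evalFrom M.start u)))| + D := by
        linarith only [h_change.1]
      _ ≤ k + D := add_le_add_left (hk _ (hc M.start u v huv)) _
      _ = (k + D : ℕ) := (Nat.cast_add k D).symm
  · rintro ⟨k, hk⟩
    obtain ⟨D, hD⟩ := exists_bound_lengthDiff_completion_sub M lam₁ lam₂ omi₁ omi₂ fun _ => []
    refine ⟨k + D, fun w hw => ?_⟩
    have h_change := abs_le.mp ((abs_abs_sub_abs_le _ _).trans (hD M.start w))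
    rw [List.append_nil] at h_change
    calc |lengthDiff (outputFrom M lam₁ omi₁ M.start w) (outputFrom M lam₂ omi₂ M.start w)|
      _ ≤ |lengthDiff (outFrom M lam₁ M.start w) (outFrom M lam₂ M.start w)| + D := by
        linarith only [h_change.2]
      _ ≤ k + D := add_le_add_left (hk w hw w List.prefix_rfl) _
      _ = (k + D : ℕ) := (Nat.cast_add k D).symm

theorem bounded_length_distance_iff_bounded_delay
    {A B σ : Type*} [Fintype σ] (M : DFA A σ)
    (hacc : ∀ q : σ, ∃ w : List A, M.evalFrom M.start w = q)
    (hcoacc : ∀ q : σ, ∃ w : List A, M.evalFrom q w ∈ M.accept)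
    (lam₁ lam₂ : σ → A → List B) (omi₁ omi₂ : σ → List B) :
    (∃ k : ℕ, ∀ w : List A, M.eval w ∈ M.accept →
        |((outFrom M lam₁ M.start w ++ omi₁ (M.eval w)).length : ℤ) -
          ((outFrom M lam₂ M.start w ++ omi₂ (M.eval w)).length : ℤ)| ≤ (k : ℤ)) ↔
      (∃ k : ℕ, ∀ w : List A, M.eval w ∈ M.accept →
        ∀ u : List A, u <+: w →
          |((outFrom M lam₁ M.start u).length : ℤ) -
            ((outFrom M lam₂ M.start u).length : ℤ)| ≤ (k : ℤ)) :=
  bounded_length_distance_iff_bounded_delay_general M lam₁ lam₂ omi₁ omi₂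
end
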